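/- Hierarchy of preorders: ⊑int ⊆ ⊑int·imp ⊊ ⊑ctx on λ-terms; in particular, if t ⊑int·imp u then t ⊑ctx u, and the inclusion ⊑int·imp ⊆ ⊑ctx is strict, as witnessed by I = λx.x and 1 = λxy.xy, for which I ⊑ctx 1 but not I ⊑int·imp 1. -/

import Mathlib

set_option autoImplicit false

/-! ### Players -/

inductive Player : Type
  | white
  | black
deriving DecidableEq

/-- The opposite player. -/
def Player.op : Player → Player
  | .white => .black
  | .black => .white

/-- `gamma p q` is `0` if the players agree (silent) and `1` otherwise (interaction). -/
def Player.gamma (p q : Player) : ℕ := if p = q then 0 else 1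

/-! ### Ordinary λ-terms (de Bruijn representation) -/

inductive Lam : Type
  | var : ℕ → Lam
  | lam : Lam → Lam
  | app : Lam → Lam → Lam
deriving DecidableEq

namespace Lam

/-- Shift the free de Bruijn indices ≥ `d` by one. -/
def liftAt : Lam → ℕ → Lam
  | .var n, d => .var (if n < d then n else n + 1)
  | .lam t, d => .lam (t.liftAt (d + 1))
  | .app t u, d => .app (t.liftAt d) (u.liftAt d)

/-- Capture-avoiding substitution of `u` for the de Bruijn index `x`. -/
def subst : Lam → ℕ → Lam → Lam
  | .var n, x, u => if n = x then u else if x < n then .var (n - 1) else .var n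
  | .lam t, x, u => .lam (t.subst (x + 1) (u.liftAt 0))
  | .app t s, x, u => .app (t.subst x u) (s.subst x u)

end Lam

/-- Root β-rule: `(λx.t) u ↦ t[x:=u]`. -/
inductive LBetaRoot : Lam → Lam → Prop
  | beta (t u : Lam) : LBetaRoot (.app (.lam t) u) (t.subst 0 u)

/-- Root η-rule: `λx. t x ↦ t` with `x ∉ FV(t)` (enforced by the lifting). -/
inductive LEtaRoot : Lam → Lam → Prop
  | eta (t : Lam) : LEtaRoot (.lam (.app (t.liftAt 0) (.var 0))) t

/-- Closure of a root relation under all contexts. -/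
inductive LFull (R : Lam → Lam → Prop) : Lam → Lam → Prop
  | root {t u : Lam} : R t u → LFull R t u
  | lam {t u : Lam} : LFull R t u → LFull R (.lam t) (.lam u)
  | appL {t t' : Lam} (u : Lam) : LFull R t t' → LFull R (.app t u) (.app t' u)
  | appR (t : Lam) {u u' : Lam} : LFull R u u' → LFull R (.app t u) (.app t u')

/-- Closure under applicative spine contexts `⟨·⟩ t1 … tk`. -/
inductive LSpine (R : Lam → Lam → Prop) : Lam → Lam → Prop
  | root {t u : Lam} : R t u → LSpine R t u
  | appL {t t' : Lam} (u : Lam) : LSpine R t t' → LSpine R (.app t u) (.app t' u)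

/-- Closure under head contexts `λx1…xn.⟨·⟩ t1 … tk`. -/
inductive LHead (R : Lam → Lam → Prop) : Lam → Lam → Prop
  | spine {t u : Lam} : LSpine R t u → LHead R t u
  | lam {t u : Lam} : LHead R t u → LHead R (.lam t) (.lam u)

/-- β-reduction. -/
def LBeta : Lam → Lam → Prop := LFull LBetaRoot
/-- η-reduction. -/
def LEta : Lam → Lam → Prop := LFull LEtaRoot
/-- Head reduction. -/
def LHStep : Lam → Lam → Prop := LHead LBetaRoot
/-- Multistep head reduction. -/
def LHSteps : Lam → Lam → Prop := Relation.ReflTransGen LHStep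

/-- β-conversion (reflexive-symmetric-transitive closure of β-reduction). -/
def LBetaConv : Lam → Lam → Prop :=
  Relation.ReflTransGen (fun a b => LBeta a b ∨ LBeta b a)
/-- η-conversion. -/
def LEtaConv : Lam → Lam → Prop :=
  Relation.ReflTransGen (fun a b => LEta a b ∨ LEta b a)

/-- Head normal forms: no head step out of `t`. -/
def Lam.LHNF (t : Lam) : Prop := ∀ u, ¬ LHStep t u

/-- Head convergence: `t ⇓h`. -/
def Lam.HConv (t : Lam) : Prop := ∃ h, LHSteps t h ∧ h.LHNF

/-- Ordinary contexts (one hole). -/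
inductive LCtx : Type
  | hole : LCtx
  | lam : LCtx → LCtx
  | appL : LCtx → Lam → LCtx
  | appR : Lam → LCtx → LCtx

/-- Plugging (allowing variable capture). -/
def LCtx.fill : LCtx → Lam → Lam
  | .hole, t => t
  | .lam C, t => .lam (C.fill t)
  | .appL C u, t => .app (C.fill t) u
  | .appR s C, t => .app s (C.fill t)

/-- Head contextual preorder on λ-terms. -/
def CtxLe (t u : Lam) : Prop := ∀ C : LCtx, (C.fill t).HConv → (C.fill u).HConv

/-! ### Checkers terms -/

inductive CTerm : Type
  | var : ℕ → CTerm
  | lam : Player → CTerm → CTerm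
  | app : Player → CTerm → CTerm → CTerm
deriving DecidableEq

namespace CTerm

/-- Shift the free de Bruijn indices ≥ `d` by one. -/
def liftAt : CTerm → ℕ → CTerm
  | .var n, d => .var (if n < d then n else n + 1)
  | .lam p t, d => .lam p (t.liftAt (d + 1))
  | .app p t u, d => .app p (t.liftAt d) (u.liftAt d)

/-- Capture-avoiding substitution of `u` for the de Bruijn index `x`. -/
def subst : CTerm → ℕ → CTerm → CTerm
  | .var n, x, u => if n = x then u else if x < n then .var (n - 1) else .var n
  | .lam p t, x, u => .lam p (t.subst (x + 1) (u.liftAt 0))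
  | .app p t s, x, u => .app p (t.subst x u) (s.subst x u)

/-- The underlying ordinary λ-term of a checkers term. -/
def untag : CTerm → Lam
  | .var n => .var n
  | .lam _ t => .lam t.untag
  | .app _ t u => .app t.untag u.untag

end CTerm

/-- Player lifting: tag every abstraction and application with player `p`. -/
def Lam.tag : Lam → Player → CTerm
  | .var n, _ => .var n
  | .lam t, p => .lam p (t.tag p)
  | .app t u, p => .app p (t.tag p) (u.tag p)

/-- Silent β root rule: the abstraction and the application carry the same player. -/
inductive SilentRoot : CTerm → CTerm → Prop
  | beta (p : Player) (t u : CTerm) : SilentRoot (.app p (.lam p t) u) (t.subst 0 u)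

/-- Interaction β root rule: the application carries the opposite player of the abstraction. -/
inductive InterRoot : CTerm → CTerm → Prop
  | beta (p : Player) (t u : CTerm) : InterRoot (.app p.op (.lam p t) u) (t.subst 0 u)

/-- Closure of a root relation under all checkers contexts. -/
inductive CFull (R : CTerm → CTerm → Prop) : CTerm → CTerm → Prop
  | root {t u : CTerm} : R t u → CFull R t u
  | lam (p : Player) {t u : CTerm} : CFull R t u → CFull R (.lam p t) (.lam p u)
  | appL (p : Player) {t t' : CTerm} (u : CTerm) : CFull R t t' → CFull R (.app p t u) (.app p t' u)
  | appR (p : Player) (t : CTerm) {u u' : CTerm} : CFull R u u' → CFull R (.app p t u) (.app p t u')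

/-- Closure under applicative spine contexts `⟨·⟩ @_{q1} t1 … @_{qk} tk`. -/
inductive CSpine (R : CTerm → CTerm → Prop) : CTerm → CTerm → Prop
  | root {t u : CTerm} : R t u → CSpine R t u
  | appL (p : Player) {t t' : CTerm} (u : CTerm) : CSpine R t t' → CSpine R (.app p t u) (.app p t' u)

/-- Closure under checkers head contexts `λ_{p1}x1…λ_{pn}xn.⟨·⟩ @_{q1} t1 … @_{qk} tk`. -/
inductive CHead (R : CTerm → CTerm → Prop) : CTerm → CTerm → Prop
  | spine {t u : CTerm} : CSpine R t u → CHead R t u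
  | lam (p : Player) {t u : CTerm} : CHead R t u → CHead R (.lam p t) (.lam p u)

/-- Silent β-reduction `→τ`. -/
def StepTau : CTerm → CTerm → Prop := CFull SilentRoot
/-- Interaction β-reduction `→⊛`. -/
def StepInt : CTerm → CTerm → Prop := CFull InterRoot
/-- Checkers β-reduction `→βch`. -/
def StepBch (t u : CTerm) : Prop := StepTau t u ∨ StepInt t u

/-- Silent head reduction `→hτ`. -/
def HStepTau : CTerm → CTerm → Prop := CHead SilentRoot
/-- Interaction head reduction `→h⊛`. -/
def HStepInt : CTerm → CTerm → Prop := CHead InterRoot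
/-- Checkers head reduction `→hch`. -/
def HStepCh (t u : CTerm) : Prop := HStepTau t u ∨ HStepInt t u

/-- Checkers head normal form. -/
def CTerm.HNF (t : CTerm) : Prop := ∀ u, ¬ HStepCh t u

/-- `BigStep t k` means `t ⇓^k`: the (deterministic) checkers head evaluation of `t`
terminates and performs exactly `k` interaction steps. -/
inductive BigStep : CTerm → ℕ → Prop
  | nf {t : CTerm} : t.HNF → BigStep t 0
  | silent {t u : CTerm} {k : ℕ} : HStepTau t u → BigStep u k → BigStep t k
  | inter {t u : CTerm} {k : ℕ} : HStepInt t u → BigStep u k → BigStep t (k + 1)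

/-- `HRed t n i u`: a checkers head reduction sequence from `t` to `u` of length `n`
containing exactly `i` interaction steps. -/
inductive HRed : CTerm → ℕ → ℕ → CTerm → Prop
  | refl (t : CTerm) : HRed t 0 0 t
  | silent {t u s : CTerm} {n i : ℕ} : HStepTau t u → HRed u n i s → HRed t (n + 1) i s
  | inter {t u s : CTerm} {n i : ℕ} : HStepInt t u → HRed u n i s → HRed t (n + 1) (i + 1) s

/-- Checkers contexts (one hole). -/
inductive CCtx : Type
  | hole : CCtx
  | lam : Player → CCtx → CCtx
  | appL : Player → CCtx → CTerm → CCtx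
  | appR : Player → CTerm → CCtx → CCtx

/-- Plugging (allowing variable capture). -/
def CCtx.fill : CCtx → CTerm → CTerm
  | .hole, t => t
  | .lam p C, t => .lam p (C.fill t)
  | .appL p C u, t => .app p (C.fill t) u
  | .appR p s C, t => .app p s (C.fill t)

/-- Player lifting of ordinary contexts. -/
def LCtx.tag : LCtx → Player → CCtx
  | .hole, _ => .hole
  | .lam C, p => .lam p (C.tag p)
  | .appL C u, p => .appL p (C.tag p) (u.tag p)
  | .appR s C, p => .appR p (s.tag p) (C.tag p)

/-- Checkers interaction preorder `≼ctx⊛` on checkers terms. -/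
def IntCtxLe (t u : CTerm) : Prop :=
  ∀ (C : CCtx) (k : ℕ), BigStep (C.fill t) k → BigStep (C.fill u) k

/-- Checkers interaction improvement `≼imp⊛` on checkers terms. -/
def ImpCtxLe (t u : CTerm) : Prop :=
  ∀ (C : CCtx) (k : ℕ), BigStep (C.fill t) k → ∃ k', k' ≤ k ∧ BigStep (C.fill u) k'

/-- Interaction preorder `⊑int` on ordinary λ-terms, via black lifting. -/
def IntLe (t u : Lam) : Prop := IntCtxLe (t.tag .black) (u.tag .black)

/-- Interaction improvement `⊑int·imp` on ordinary λ-terms, via black lifting. -/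
def ImpLe (t u : Lam) : Prop := ImpCtxLe (t.tag .black) (u.tag .black)

/-- Interaction equivalence `≡int`. -/
def IntEq (t u : Lam) : Prop := IntLe t u ∧ IntLe u t

/-- Silent conversion `=τ`: reflexive-symmetric-transitive closure of `→τ`. -/
def SilentConv : CTerm → CTerm → Prop :=
  Relation.ReflTransGen (fun a b => StepTau a b ∨ StepTau b a)



/-! ### de Bruijn lemmas -/

theorem Lam.lift_lift (t : Lam) : ∀ (e d : ℕ), e ≤ d →
    (t.liftAt e).liftAt (d + 1) = (t.liftAt d).liftAt e := by
  induction t with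
  | var n => intro e d h; simp only [Lam.liftAt, Lam.var.injEq]; grind
  | lam t ih => intro e d h; simp only [Lam.liftAt]; rw [ih (e+1) (d+1) (by omega)]
  | app t u iht ihu => intro e d h; simp only [Lam.liftAt]; rw [iht e d h, ihu e d h]

theorem Lam.subst_lift_cancel (t : Lam) : ∀ (d : ℕ) (u : Lam), (t.liftAt d).subst d u = t := by
  induction t with
  | var n =>
    intro d u
    simp only [Lam.liftAt, Lam.subst]
    by_cases h : n < d
    · simp [h, Nat.ne_of_lt h, Nat.not_lt_of_lt h]
    · simp only [if_neg h]
      rw [if_neg (by omega), if_pos (by omega)]; simp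
  | lam t ih => intro d u; simp only [Lam.liftAt, Lam.subst]; rw [ih]
  | app t u iht ihu => intro d r; simp only [Lam.liftAt, Lam.subst]; rw [iht, ihu]

theorem Lam.lift_subst_ge (t : Lam) : ∀ (d x : ℕ) (u : Lam), d ≤ x →
    (t.liftAt d).subst (x + 1) (u.liftAt d) = (t.subst x u).liftAt d := by
  induction t with
  | var n =>
    intro d x u h
    simp only [Lam.liftAt, Lam.subst]
    split_ifs <;> (try simp only [Lam.liftAt, Lam.var.injEq]) <;> grind
  | lam t ih =>
    intro d x u h
    simp only [Lam.liftAt, Lam.subst]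
    rw [← ih (d+1) (x+1) _ (by omega), Lam.lift_lift u 0 d (by omega)]
  | app t u iht ihu => intro d x r h; simp only [Lam.liftAt, Lam.subst]; rw [iht _ _ _ h, ihu _ _ _ h]

theorem Lam.lift_subst_le (t : Lam) : ∀ (d x : ℕ) (u : Lam), x ≤ d →
    (t.liftAt (d + 1)).subst x (u.liftAt d) = (t.subst x u).liftAt d := by
  induction t with
  | var n =>
    intro d x u h
    simp only [Lam.liftAt, Lam.subst]
    split_ifs <;> (try simp only [Lam.liftAt, Lam.var.injEq]) <;> grind
  | lam t ih =>
    intro d x u h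
    simp only [Lam.liftAt, Lam.subst]
    rw [← ih (d+1) (x+1) _ (by omega), Lam.lift_lift u 0 d (by omega)]
  | app t u iht ihu => intro d x r h; simp only [Lam.liftAt, Lam.subst]; rw [iht _ _ _ h, ihu _ _ _ h]

theorem Lam.subst_lift_var (t : Lam) : ∀ (x : ℕ), (t.liftAt (x + 1)).subst x (.var x) = t := by
  induction t with
  | var n =>
    intro x
    simp only [Lam.liftAt, Lam.subst]
    split_ifs <;> simp only [Lam.var.injEq] <;> omega
  | lam t ih => intro x; simp only [Lam.liftAt, Lam.subst]; simp [ih (x+1)]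
  | app t u iht ihu => intro x; simp only [Lam.liftAt, Lam.subst]; rw [iht, ihu]

/-! ### η-expansion relation -/

inductive EtaX : Lam → Lam → Prop
  | var (n : ℕ) : EtaX (.var n) (.var n)
  | lam {t u : Lam} : EtaX t u → EtaX (.lam t) (.lam u)
  | app {t u s r : Lam} : EtaX t u → EtaX s r → EtaX (.app t s) (.app u r)
  | eta {t u : Lam} : EtaX t u → EtaX t (.lam (.app (u.liftAt 0) (.var 0)))

theorem EtaX.refl (t : Lam) : EtaX t t := by
  induction t with
  | var n => exact .var n
  | lam t ih => exact .lam ih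
  | app t u h1 h2 => exact .app h1 h2

theorem EtaX.lift {t u : Lam} (h : EtaX t u) : ∀ d, EtaX (t.liftAt d) (u.liftAt d) := by
  induction h with
  | var n => intro d; exact .refl _
  | lam _ ih => intro d; exact .lam (ih _)
  | app _ _ h1 h2 => intro d; exact .app (h1 d) (h2 d)
  | eta _ ih =>
    intro d
    have := EtaX.eta (ih d)
    simp only [Lam.liftAt]
    rw [Lam.lift_lift _ 0 d (by omega)]
    simpa using this

theorem EtaX.subst {t u : Lam} (h : EtaX t u) : ∀ (x : ℕ) {s r : Lam}, EtaX s r →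
    EtaX (t.subst x s) (u.subst x r) := by
  induction h with
  | var n =>
    intro x s r h
    simp only [Lam.subst]
    split_ifs
    · exact h
    · exact .refl _
    · exact .refl _
  | lam _ ih => intro x s r h; exact .lam (ih _ (h.lift 0))
  | app _ _ h1 h2 => intro x s r h; exact .app (h1 x h) (h2 x h)
  | eta _ ih =>
    intro x s r h
    have := EtaX.eta (ih x h)
    simp only [Lam.subst]
    rw [Lam.lift_subst_ge _ 0 x r (by omega)]
    simpa using this

theorem EtaX.fill {t u : Lam} (h : EtaX t u) (C : LCtx) : EtaX (C.fill t) (C.fill u) := by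
  induction C with
  | hole => exact h
  | lam C ih => exact .lam ih
  | appL C s ih => exact .app ih (.refl _)
  | appR s C ih => exact .app (.refl _) ih

/-! ### Spine reduction -/

def SpS : Lam → Lam → Prop := Relation.ReflTransGen (LSpine LBetaRoot)

theorem SpS.appL {t u : Lam} (h : SpS t u) (r : Lam) : SpS (.app t r) (.app u r) := by
  induction h with
  | refl => exact .refl
  | tail _ h ih => exact ih.tail (.appL r h)

theorem SpS.head {t u : Lam} (h : SpS t u) : LHSteps t u := by
  induction h with
  | refl => exact .refl
  | tail _ h ih => exact ih.tail (.spine h)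

theorem LHSteps.lam {t u : Lam} (h : LHSteps t u) : LHSteps (.lam t) (.lam u) := by
  induction h with
  | refl => exact .refl
  | tail _ h ih => exact ih.tail (.lam h)

theorem LSpine.lift {t u : Lam} (h : LSpine LBetaRoot t u) (d : ℕ) :
    LSpine LBetaRoot (t.liftAt d) (u.liftAt d) := by
  induction h with
  | root h =>
    cases h with
    | beta t u =>
      rw [← Lam.lift_subst_le t d 0 u (by omega)]
      exact .root (.beta _ _)
  | appL u _ ih => exact .appL _ ih

theorem eta_beta (v : Lam) :
    LHStep (.lam (.app ((Lam.lam v).liftAt 0) (.var 0))) (.lam v) := by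
  have h : LBetaRoot (.app (.lam (v.liftAt 1)) (.var 0)) ((v.liftAt 1).subst 0 (.var 0)) :=
    .beta _ _
  rw [Lam.subst_lift_var v 0] at h
  exact .lam (.spine (.root h))

theorem eta_steps {u v : Lam} (h : LHSteps u v) :
    LHSteps (.lam (.app (u.liftAt 0) (.var 0))) v ∨
    LHSteps (.lam (.app (u.liftAt 0) (.var 0))) (.lam (.app (v.liftAt 0) (.var 0))) := by
  induction h with
  | refl => right; exact .refl
  | tail _ hs ih =>
    rcases ih with ih | ih
    · left; exact ih.tail hs
    · cases hs with
      | spine hs => right; exact ih.tail (.lam (.spine (.appL _ (hs.lift 0))))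
      | lam hs => left; exact (ih.tail (eta_beta _)).tail (.lam hs)

/-- Strip the top-level η-expansions. -/
inductive EtaCore : Lam → Lam → Prop
  | var (n : ℕ) : EtaCore (.var n) (.var n)
  | lam {t u : Lam} : EtaX t u → EtaCore (.lam t) (.lam u)
  | app {t u s r : Lam} : EtaX t u → EtaX s r → EtaCore (.app t s) (.app u r)

theorem EtaX.strip {a v : Lam} (h : EtaX a v) (r : Lam) :
    ∃ v', SpS (.app v r) (.app v' r) ∧ EtaCore a v' := by
  induction h with
  | var n => exact ⟨_, .refl, .var n⟩
  | lam h _ => exact ⟨_, .refl, .lam h⟩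
  | app h1 h2 _ _ => exact ⟨_, .refl, .app h1 h2⟩
  | @eta t u _ ih =>
    obtain ⟨v', h1, h2⟩ := ih
    refine ⟨v', Relation.ReflTransGen.head ?_ h1, h2⟩
    have h : LBetaRoot (.app (.lam (.app (u.liftAt 0) (.var 0))) r)
      ((Lam.app (u.liftAt 0) (.var 0)).subst 0 r) := .beta _ _
    simp only [Lam.subst, Lam.subst_lift_cancel, if_true] at h
    exact .root h

theorem EtaX.simSpine {t t' : Lam} (h : LSpine LBetaRoot t t') : ∀ {a s v r : Lam},
    t = .app a s → EtaX a v → EtaX s r → ∃ u', SpS (.app v r) u' ∧ EtaX t' u' := by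
  induction h with
  | root h =>
    intro a s v r e ha hs
    cases h with
    | beta b s' =>
      cases e
      obtain ⟨v', h1, h2⟩ := ha.strip r
      cases h2 with
      | lam h2 => exact ⟨_, h1.tail (.root (.beta _ _)), h2.subst 0 hs⟩
  | @appL c c' s' hc ih =>
    intro a s v r e ha hs
    cases e
    obtain ⟨v', h1, h2⟩ := ha.strip r
    cases h2 with
    | app h3 h4 =>
      obtain ⟨u', h5, h6⟩ := ih rfl h3 h4
      exact ⟨_, h1.trans (h5.appL r), .app h6 hs⟩
    | lam h3 => cases hc with | root h => cases h
    | var n => cases hc with | root h => cases h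

theorem EtaX.simHead {t u : Lam} (h : EtaX t u) : ∀ {t' : Lam}, LHStep t t' →
    ∃ u', LHSteps u u' ∧ EtaX t' u' := by
  induction h with
  | var n =>
    intro t' h
    cases h with | spine h => cases h with | root h => cases h
  | lam _ ih =>
    intro t' h
    cases h with
    | spine h => cases h with | root h => cases h
    | lam h =>
      obtain ⟨u', h1, h2⟩ := ih h
      exact ⟨_, h1.lam, .lam h2⟩
  | app h1 h2 _ _ =>
    intro t' h
    cases h with
    | spine h =>
      obtain ⟨u', h3, h4⟩ := EtaX.simSpine h rfl h1 h2
      exact ⟨_, h3.head, h4⟩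
  | eta _ ih =>
    intro t' h
    obtain ⟨u', h1, h2⟩ := ih h
    rcases eta_steps h1 with h3 | h3
    · exact ⟨_, h3, h2⟩
    · exact ⟨_, h3, .eta h2⟩

inductive Neu : Lam → Prop
  | var (n : ℕ) : Neu (.var n)
  | app {t : Lam} (s : Lam) : Neu t → Neu (.app t s)

theorem Neu.noSpine {t : Lam} (h : Neu t) : ∀ u, ¬ LSpine LBetaRoot t u := by
  induction h with
  | var n => intro u h; cases h with | root h => cases h
  | app s h ih =>
    intro u h'
    cases h' with
    | root h' => cases h' with | beta => cases h
    | appL _ h' => exact ih _ h'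

theorem Neu.hnf {t : Lam} (h : Neu t) : t.LHNF := by
  intro u h'
  cases h' with
  | spine h' => exact h.noSpine _ h'
  | lam h' => cases h

theorem Lam.LHNF.lam {t : Lam} (h : t.LHNF) : (Lam.lam t).LHNF := by
  intro u h'
  cases h' with
  | spine h' => cases h' with | root h' => cases h'
  | lam h' => exact h _ h'

theorem Lam.LHNF.neu {t : Lam} (h : t.LHNF) : Neu t ∨ ∃ b, t = .lam b := by
  induction t with
  | var n => exact .inl (.var n)
  | lam t _ => exact .inr ⟨_, rfl⟩
  | app t s ih _ =>
    left
    by_cases hl : ∃ b, t = .lam b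
    · obtain ⟨b, rfl⟩ := hl
      exact (h _ (.spine (.root (.beta _ _)))).elim
    · refine .app s ((ih ?_).resolve_right hl)
      intro u hu
      cases hu with
      | spine hu => exact h _ (.spine (.appL _ hu))
      | lam hu => exact hl ⟨_, rfl⟩

theorem Neu.lift {t : Lam} (h : Neu t) (d : ℕ) : Neu (t.liftAt d) := by
  induction h with
  | var n => exact .var _
  | app s _ ih => exact .app _ ih

theorem EtaX.neu {a : Lam} (h : Neu a) : ∀ {v : Lam}, EtaX a v → ∀ r,
    ∃ v', SpS (.app v r) (.app v' r) ∧ Neu v' := by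
  induction h with
  | var n =>
    intro v hv r
    obtain ⟨v', h1, h2⟩ := hv.strip r
    cases h2
    exact ⟨_, h1, .var n⟩
  | app s _ ih =>
    intro v hv r
    obtain ⟨v', h1, h2⟩ := hv.strip r
    cases h2 with
    | @app _ u _ r' h3 h4 =>
      obtain ⟨w, h5, h6⟩ := ih h3 r'
      exact ⟨_, h1.trans (h5.appL r), .app _ h6⟩

theorem EtaX.hnf {t u : Lam} (h : EtaX t u) : t.LHNF → u.HConv := by
  induction h with
  | var n => intro h; exact ⟨_, .refl, h⟩
  | lam _ ih =>
    intro h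
    obtain ⟨v, h1, h2⟩ := ih (fun u hu => h _ (.lam hu))
    exact ⟨_, LHSteps.lam h1, h2.lam⟩
  | @app t u s r h1 h2 _ _ =>
    intro h
    rcases h.neu with h | ⟨b, hb⟩
    · cases h with
      | app _ h =>
        obtain ⟨v, h3, h4⟩ := EtaX.neu h h1 r
        exact ⟨_, h3.head, (Neu.app r h4).hnf⟩
    · cases hb
  | eta _ ih =>
    intro h
    obtain ⟨v, h1, h2⟩ := ih h
    rcases eta_steps h1 with h3 | h3
    · exact ⟨_, h3, h2⟩
    · rcases h2.neu with h4 | ⟨b, rfl⟩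
      · exact ⟨_, h3, (Neu.app _ (h4.lift 0)).hnf.lam⟩
      · exact ⟨_, h3.tail (eta_beta b), h2⟩

theorem EtaX.conv {t u : Lam} (h : EtaX t u) (ht : t.HConv) : u.HConv := by
  obtain ⟨n, h1, h2⟩ := ht
  revert u
  induction h1 using Relation.ReflTransGen.head_induction_on with
  | refl => intro u h; exact h.hnf h2
  | head hs _ ih =>
    intro u h
    obtain ⟨u', h3, h4⟩ := h.simHead hs
    obtain ⟨v, h5, h6⟩ := ih h4
    exact ⟨v, h3.trans h5, h6⟩

/-! ### Tagging -/

theorem Lam.tag_lift (p : Player) (t : Lam) : ∀ d, (t.liftAt d).tag p = (t.tag p).liftAt d := by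
  induction t with
  | var n => intro d; rfl
  | lam t ih => intro d; simp [Lam.liftAt, Lam.tag, CTerm.liftAt, ih]
  | app t u h1 h2 => intro d; simp [Lam.liftAt, Lam.tag, CTerm.liftAt, h1, h2]

theorem Lam.tag_subst (p : Player) (t : Lam) : ∀ x u,
    (t.subst x u).tag p = (t.tag p).subst x (u.tag p) := by
  induction t with
  | var n =>
    intro x u
    simp only [Lam.subst, Lam.tag, CTerm.subst]
    split_ifs <;> rfl
  | lam t ih => intro d u; simp [Lam.subst, Lam.tag, CTerm.subst, ih, Lam.tag_lift]
  | app t u h1 h2 => intro d r; simp [Lam.subst, Lam.tag, CTerm.subst, h1, h2]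

theorem CTerm.untag_lift (t : CTerm) : ∀ d, (t.liftAt d).untag = t.untag.liftAt d := by
  induction t with
  | var n => intro d; rfl
  | lam p t ih => intro d; simp [Lam.liftAt, CTerm.untag, CTerm.liftAt, ih]
  | app p t u h1 h2 => intro d; simp [Lam.liftAt, CTerm.untag, CTerm.liftAt, h1, h2]

theorem CTerm.untag_subst (t : CTerm) : ∀ x u,
    (t.subst x u).untag = t.untag.subst x u.untag := by
  induction t with
  | var n =>
    intro x u
    simp only [Lam.subst, CTerm.untag, CTerm.subst]
    split_ifs <;> rfl
  | lam p t ih => intro d u; simp [Lam.subst, CTerm.untag, CTerm.subst, ih, CTerm.untag_lift]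
  | app p t u h1 h2 => intro d r; simp [Lam.subst, CTerm.untag, CTerm.subst, h1, h2]

theorem Lam.untag_tag (p : Player) (t : Lam) : (t.tag p).untag = t := by
  induction t with
  | var n => rfl
  | lam t ih => simp [Lam.tag, CTerm.untag, ih]
  | app t u h1 h2 => simp [Lam.tag, CTerm.untag, h1, h2]

theorem LCtx.tag_fill (p : Player) (C : LCtx) (t : Lam) :
    (C.fill t).tag p = (C.tag p).fill (t.tag p) := by
  induction C with
  | hole => rfl
  | lam C ih => simp [LCtx.fill, Lam.tag, LCtx.tag, CCtx.fill, ih]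
  | appL C s ih => simp [LCtx.fill, Lam.tag, LCtx.tag, CCtx.fill, ih]
  | appR s C ih => simp [LCtx.fill, Lam.tag, LCtx.tag, CCtx.fill, ih]

theorem LSpine.tag (p : Player) {t u : Lam} (h : LSpine LBetaRoot t u) :
    CSpine SilentRoot (t.tag p) (u.tag p) := by
  induction h with
  | root h =>
    cases h with
    | beta t u => rw [Lam.tag_subst]; exact .root (.beta _ _ _)
  | appL s _ ih => exact .appL _ _ ih

theorem LHStep.tag (p : Player) {t u : Lam} (h : LHStep t u) :
    HStepTau (t.tag p) (u.tag p) := by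
  induction h with
  | spine h => exact .spine (h.tag p)
  | lam _ ih => exact .lam _ ih

theorem CSpine.untag {R : CTerm → CTerm → Prop}
    (hR : ∀ a b, R a b → LBetaRoot a.untag b.untag) {t u : CTerm} (h : CSpine R t u) :
    LSpine LBetaRoot t.untag u.untag := by
  induction h with
  | root h => exact .root (hR _ _ h)
  | appL _ _ _ ih => exact .appL _ ih

theorem CHead.untag {R : CTerm → CTerm → Prop}
    (hR : ∀ a b, R a b → LBetaRoot a.untag b.untag) {t u : CTerm} (h : CHead R t u) :
    LHStep t.untag u.untag := by
  induction h with
  | spine h => exact .spine (h.untag hR)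
  | lam _ _ ih => exact .lam ih

theorem HStepTau.untag {t u : CTerm} (h : HStepTau t u) : LHStep t.untag u.untag := by
  refine CHead.untag ?_ h
  rintro _ _ ⟨p, a, b⟩
  rw [CTerm.untag_subst]; exact .beta _ _

theorem HStepInt.untag {t u : CTerm} (h : HStepInt t u) : LHStep t.untag u.untag := by
  refine CHead.untag ?_ h
  rintro _ _ ⟨p, a, b⟩
  rw [CTerm.untag_subst]; exact .beta _ _

theorem spine_of_untag (c : CTerm) : ∀ {u : Lam}, LSpine LBetaRoot c.untag u →
    ∃ c', CSpine SilentRoot c c' ∨ CSpine InterRoot c c' := by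
  induction c with
  | var n => intro u h; cases h with | root h => cases h
  | lam p t _ => intro u h; cases h with | root h => cases h
  | app p t s ih _ =>
    intro u h
    cases h with
    | root h =>
      cases t with
      | var n => cases h
      | app q a b => cases h
      | lam q b =>
        cases p <;> cases q
        · exact ⟨_, .inl (.root (.beta .white b s))⟩
        · exact ⟨_, .inr (.root (.beta .black b s))⟩
        · exact ⟨_, .inr (.root (.beta .white b s))⟩
        · exact ⟨_, .inl (.root (.beta .black b s))⟩
    | appL _ h =>
      obtain ⟨c', h | h⟩ := ih h
      · exact ⟨_, .inl (.appL _ _ h)⟩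
      · exact ⟨_, .inr (.appL _ _ h)⟩

theorem head_of_untag (c : CTerm) : ∀ {u : Lam}, LHStep c.untag u → ∃ c', HStepCh c c' := by
  induction c with
  | var n => intro u h; cases h with | spine h => cases h with | root h => cases h
  | lam p t ih =>
    intro u h
    cases h with
    | spine h => cases h with | root h => cases h
    | lam h =>
      obtain ⟨c', h | h⟩ := ih h
      · exact ⟨_, .inl (.lam _ h)⟩
      · exact ⟨_, .inr (.lam _ h)⟩
  | app p t s _ _ =>
    intro u h
    cases h with
    | spine h =>
      obtain ⟨c', h | h⟩ := spine_of_untag (.app p t s) h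
      · exact ⟨_, .inl (.spine h)⟩
      · exact ⟨_, .inr (.spine h)⟩

theorem BigStep.conv {c : CTerm} {k : ℕ} (h : BigStep c k) : c.untag.HConv := by
  induction h with
  | nf h =>
    refine ⟨_, .refl, fun u hu => ?_⟩
    obtain ⟨c', hc⟩ := head_of_untag _ hu
    exact h _ hc
  | silent h _ ih =>
    obtain ⟨v, h1, h2⟩ := ih
    exact ⟨v, Relation.ReflTransGen.head h.untag h1, h2⟩
  | inter h _ ih =>
    obtain ⟨v, h1, h2⟩ := ih
    exact ⟨v, Relation.ReflTransGen.head h.untag h1, h2⟩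

theorem Lam.HConv.bigStep (p : Player) {t : Lam} (h : t.HConv) : BigStep (t.tag p) 0 := by
  obtain ⟨n, h1, h2⟩ := h
  induction h1 using Relation.ReflTransGen.head_induction_on with
  | refl =>
    refine .nf fun u hu => ?_
    rcases hu with hu | hu
    · have := hu.untag; rw [Lam.untag_tag] at this; exact h2 _ this
    · have := hu.untag; rw [Lam.untag_tag] at this; exact h2 _ this
  | head hs _ ih => exact .silent (LHStep.tag p hs) ih

theorem ImpLe.ctxLe {t u : Lam} (h : ImpLe t u) : CtxLe t u := by
  intro C hC
  have h1 := hC.bigStep .black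
  rw [LCtx.tag_fill] at h1
  obtain ⟨k, _, h2⟩ := h _ _ h1
  rw [← LCtx.tag_fill] at h2
  have := h2.conv
  rwa [Lam.untag_tag] at this

/-! ### Determinism -/

def cspine : CTerm → Option (ℕ × CTerm)
  | .app p (.lam q t) u => some (Player.gamma p q, t.subst 0 u)
  | .app p (.app q a b) u => (cspine (.app q a b)).map fun x => (x.1, .app p x.2 u)
  | _ => none

def chead : CTerm → Option (ℕ × CTerm)
  | .lam p t => (chead t).map fun x => (x.1, .lam p x.2)
  | t => cspine t

theorem cspine_of {R : CTerm → CTerm → Prop} (i : ℕ)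
    (hR : ∀ a b, R a b → cspine a = some (i, b)) {t u : CTerm} (h : CSpine R t u) :
    cspine t = some (i, u) := by
  induction h with
  | root h => exact hR _ _ h
  | @appL p t t' u h ih =>
    cases t with
    | var n => simp [cspine] at ih
    | lam q b => simp [cspine] at ih
    | app q a b => simp [cspine, ih]

theorem chead_of {R : CTerm → CTerm → Prop} (i : ℕ)
    (hR : ∀ a b, R a b → cspine a = some (i, b)) {t u : CTerm} (h : CHead R t u) :
    chead t = some (i, u) := by
  induction h with
  | @spine t u h =>
    have := cspine_of i hR h
    cases t with
    | var n => simpa [chead] using this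
    | lam q b => simp [cspine] at this
    | app q a b => simpa [chead] using this
  | lam p _ ih => simp [chead, ih]

theorem HStepTau.chead {t u : CTerm} (h : HStepTau t u) : chead t = some (0, u) := by
  refine chead_of 0 ?_ h
  rintro _ _ ⟨p, a, b⟩
  simp [cspine, Player.gamma]

theorem HStepInt.chead {t u : CTerm} (h : HStepInt t u) : chead t = some (1, u) := by
  refine chead_of 1 ?_ h
  rintro _ _ ⟨p, a, b⟩
  cases p <;> simp [cspine, Player.gamma, Player.op]

theorem BigStep.inter_inv {t u : CTerm} {k : ℕ} (h : BigStep t k) (hs : HStepInt t u) :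
    ∃ k', k = k' + 1 ∧ BigStep u k' := by
  have e := hs.chead
  cases h with
  | nf h => exact (h _ (.inr hs)).elim
  | silent h _ => rw [h.chead] at e; simp at e
  | inter h h' =>
    rw [h.chead] at e
    simp only [Option.some.injEq, Prod.mk.injEq, true_and] at e
    subst e
    exact ⟨_, rfl, h'⟩

theorem not_impLe_I_one :
    ¬ ImpLe (.lam (.var 0)) (.lam (.lam (.app (.var 1) (.var 0)))) := by
  intro h
  let J : CTerm := .lam .white (.var 0)
  have h1 : BigStep ((CCtx.appL .white (.appL .white .hole J) (.var 0)).fill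
      ((Lam.lam (.var 0)).tag .black)) 1 := by
    refine .inter (k := 0) (.spine (.appL _ _ (.root (InterRoot.beta .black (.var 0) J)))) ?_
    refine .silent (.spine (.root (SilentRoot.beta .white (.var 0) (.var 0)))) ?_
    refine .nf fun u hu => ?_
    rcases hu with hu | hu
    · have := hu.chead; simp [CTerm.subst, chead, cspine] at this
    · have := hu.chead; simp [CTerm.subst, chead, cspine] at this
  obtain ⟨k, hk, h2⟩ := h _ _ h1
  obtain ⟨k1, e1, h3⟩ := h2.inter_inv
    (.spine (.appL _ _ (.root (InterRoot.beta .black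
      (.lam .black (.app .black (.var 1) (.var 0))) J))))
  obtain ⟨k2, e2, h4⟩ := h3.inter_inv
    (.spine (.root (InterRoot.beta .black (.app .black J (.var 0)) (.var 0))))
  obtain ⟨k3, e3, h5⟩ := h4.inter_inv
    (.spine (.root (InterRoot.beta .white (.var 0) (.var 0))))
  omega

/-- Hierarchy: `⊑int ⊆ ⊑int·imp ⊊ ⊑ctx`, the strictness of the second inclusion being
witnessed by `I = λx.x` and `1 = λxy.xy`. -/
theorem hierarchy_of_preorders :
    (∀ t u, IntLe t u → ImpLe t u) ∧
    (∀ t u, ImpLe t u → CtxLe t u) ∧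
    CtxLe (.lam (.var 0)) (.lam (.lam (.app (.var 1) (.var 0)))) ∧
    ¬ ImpLe (.lam (.var 0)) (.lam (.lam (.app (.var 1) (.var 0)))) := by
  refine ⟨fun t u h C k hk => ⟨k, le_rfl, h C k hk⟩, fun t u h => h.ctxLe, ?_, not_impLe_I_one⟩
  intro C
  exact EtaX.conv (EtaX.fill (.lam (.eta (.var 0))) C)
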